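/- arXiv:1703.01581 — 3 statements merged into one kernel-verified Lean document; each statement's English description precedes it below -/
import Mathlib

section
/- Let S be a dense subsemigroup of (ℍ, +) such that S ∩ (B(1) \ {0}) is a subsemigroup of (B(1) \ {0}, ·), where B(1) is the open unit ball around 0. If A ⊆ S is an IP set near 0 in S, then for every s ∈ S ∩ B(1) \ {0}, the set sA = {s·a : a ∈ A} is also an IP set near 0, and likewise As = {a·s : a ∈ A} is an IP set near 0. -/
open Filter Topology

/-- Finite sums of distinct terms of a sequence of quaternions. -/
def FS (x : ℕ → Quaternion ℝ) : Set (Quaternion ℝ) :=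
  {a | ∃ H : Finset ℕ, H.Nonempty ∧ a = ∑ t ∈ H, x t}

/-- The series `∑ₙ xₙ` converges (its partial sums converge). -/
def SeriesConverges (x : ℕ → Quaternion ℝ) : Prop :=
  ∃ L : Quaternion ℝ, Tendsto (fun N => ∑ n ∈ Finset.range N, x n) atTop (𝓝 L)

/-- `A` is an IP set near 0 in `S`: there is a sequence in `S` whose series converges
and whose set of finite sums lies in `A`. -/
def IPNearZero (S A : Set (Quaternion ℝ)) : Prop :=
  ∃ x : ℕ → Quaternion ℝ, (∀ n, x n ∈ S) ∧ SeriesConverges x ∧ FS x ⊆ A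

/-!
The terms of a convergent series tend to `0`, so a tail of the witnessing sequence lies in the unit
ball, where multiplication by `s` preserves `S`. Dropping finitely many terms keeps the series
convergent and only shrinks the set of finite sums; multiplying the tail by `s` is additive and
continuous, so it carries the tail to a witness for the translate.
-/

open SummationFilter

theorem hasSum_conditional_nat_iff_tendsto {M : Type*} [AddCommMonoid M] [TopologicalSpace M]
    {f : ℕ → M} {a : M} :
    HasSum f a (conditional ℕ) ↔
      Tendsto (fun n ↦ ∑ i ∈ Finset.range n, f i) atTop (𝓝 a) := by
  rw [HasSum, conditional_filter_eq_map_range, tendsto_map'_iff]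
  rfl

section TopologicalAddGroup

variable {G : Type*} [AddCommGroup G] [TopologicalSpace G] [IsTopologicalAddGroup G]
  {f : ℕ → G} {a : G}

theorem tendsto_zero_of_hasSum_conditional (hf : HasSum f a (conditional ℕ)) :
    Tendsto f atTop (𝓝 0) := by
  rw [hasSum_conditional_nat_iff_tendsto] at hf
  simpa [Function.comp_def, Finset.sum_range_succ] using
    (hf.comp (tendsto_add_atTop_nat 1)).sub hf

theorem hasSum_conditional_nat_add (hf : HasSum f a (conditional ℕ)) (k : ℕ) :
    HasSum (fun n ↦ f (n + k)) (a - ∑ i ∈ Finset.range k, f i) (conditional ℕ) := by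
  rw [hasSum_conditional_nat_iff_tendsto] at hf ⊢
  refine ((hf.comp (tendsto_add_atTop_nat k)).sub_const _).congr fun n ↦ ?_
  rw [Function.comp_apply, add_comm n k, Finset.sum_range_add_sub_sum_range]
  simp only [add_comm k]

end TopologicalAddGroup

/-- `A` is an IP set near `0` in `S`, for subsets of an arbitrary topological additive monoid.
Convergence of the series is conditional, that is, along the partial sums over initial segments;
`ipNearZero_iff_isIPNearZero` identifies this with `IPNearZero` on the quaternions. -/
def IsIPNearZero {M : Type*} [AddCommMonoid M] [TopologicalSpace M] (S A : Set M) : Prop :=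
  ∃ x : ℕ → M, (∀ n, x n ∈ S) ∧ Summable x (conditional ℕ) ∧
    ∀ H : Finset ℕ, H.Nonempty → ∑ t ∈ H, x t ∈ A

theorem FS_subset_iff {x : ℕ → Quaternion ℝ} {A : Set (Quaternion ℝ)} :
    FS x ⊆ A ↔ ∀ H : Finset ℕ, H.Nonempty → ∑ t ∈ H, x t ∈ A := by
  refine ⟨fun h H hH ↦ h ⟨H, hH, rfl⟩, ?_⟩
  rintro h _ ⟨H, hH, rfl⟩
  exact h H hH

theorem ipNearZero_iff_isIPNearZero {S A : Set (Quaternion ℝ)} :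
    IPNearZero S A ↔ IsIPNearZero S A := by
  simp only [IPNearZero, SeriesConverges, FS_subset_iff, IsIPNearZero, Summable,
    hasSum_conditional_nat_iff_tendsto]

namespace IsIPNearZero

theorem image {M N : Type*} [AddCommMonoid M] [TopologicalSpace M] [AddCommMonoid N]
    [TopologicalSpace N] {S A : Set M} {T : Set N} (hA : IsIPNearZero S A) (f : M →+ N)
    (hf : Continuous f) (hST : Set.MapsTo f S T) : IsIPNearZero T (f '' A) := by
  obtain ⟨x, hxS, hx, hxA⟩ := hA
  exact ⟨f ∘ x, fun n ↦ hST (hxS n), hx.map f hf,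
    fun H hH ↦ ⟨∑ t ∈ H, x t, hxA H hH, map_sum f x H⟩⟩

theorem inter_of_mem_nhds {G : Type*} [AddCommGroup G] [TopologicalSpace G]
    [IsTopologicalAddGroup G] {S A U : Set G} (hA : IsIPNearZero S A) (hU : U ∈ 𝓝 0) :
    IsIPNearZero (S ∩ U) A := by
  obtain ⟨x, hxS, ⟨a, hx⟩, hxA⟩ := hA
  obtain ⟨k, hk⟩ : ∃ k, ∀ n ≥ k, x n ∈ U :=
    eventually_atTop.1 (tendsto_zero_of_hasSum_conditional hx hU)
  refine ⟨fun n ↦ x (n + k), fun n ↦ ⟨hxS _, hk _ (Nat.le_add_left k n)⟩,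
    (hasSum_conditional_nat_add hx k).summable, fun H hH ↦ ?_⟩
  simpa only [Finset.sum_map, addRightEmbedding_apply] using
    hxA (H.map (addRightEmbedding k)) hH.map

theorem image_of_mapsTo_punctured {G : Type*} [AddCommGroup G] [TopologicalSpace G]
    [IsTopologicalAddGroup G] {S A U : Set G} (hA : IsIPNearZero S A) (hU : U ∈ 𝓝 0) (f : G →+ G)
    (hf : Continuous f) (hfS : Set.MapsTo f (S ∩ (U \ {0})) S) : IsIPNearZero S (f '' A) := by
  refine (hA.inter_of_mem_nhds hU).image f hf fun y hy ↦ ?_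
  rcases eq_or_ne y 0 with rfl | hy0
  · simpa only [map_zero] using hy.1
  · exact hfS ⟨hy.1, hy.2, hy0⟩

end IsIPNearZero

theorem ip_near_zero_translates_general {R : Type*} [NonUnitalNonAssocRing R] [TopologicalSpace R]
    [IsSemitopologicalRing R] {S A U : Set R} (hU : U ∈ 𝓝 0)
    (hSmul : ∀ a ∈ S ∩ (U \ {0}), ∀ b ∈ S ∩ (U \ {0}), a * b ∈ S)
    (hA : IsIPNearZero S A) {s : R} (hs : s ∈ S ∩ (U \ {0})) :
    IsIPNearZero S ((fun a ↦ s * a) '' A) ∧ IsIPNearZero S ((fun a ↦ a * s) '' A) :=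
  ⟨hA.image_of_mapsTo_punctured hU (.mulLeft s) (continuous_const_mul s) (hSmul s hs),
    hA.image_of_mapsTo_punctured hU (.mulRight s) (continuous_mul_const s)
      fun b hb ↦ hSmul b hb s hs⟩

/-- Let `S` be a dense subsemigroup of `(ℍ, +)` such that
`S ∩ (B(1) \ {0})` is a subsemigroup of `(B(1) \ {0}, ·)`.  If `A ⊆ S` is an IP set
near 0 in `S`, then for every `s ∈ S ∩ B(1) \ {0}`, both `sA` and `As` are IP sets
near 0. -/
theorem ip_near_zero_translates (S : Set (Quaternion ℝ))
    (hSdense : Dense S)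
    (hSadd : ∀ a ∈ S, ∀ b ∈ S, a + b ∈ S)
    (hSmul : ∀ a ∈ S ∩ (Metric.ball 0 1 \ {0}), ∀ b ∈ S ∩ (Metric.ball 0 1 \ {0}),
      a * b ∈ S ∩ (Metric.ball 0 1 \ {0}))
    (A : Set (Quaternion ℝ)) (hAS : A ⊆ S) (hA : IPNearZero S A)
    (s : Quaternion ℝ) (hs : s ∈ (S ∩ Metric.ball 0 1) \ {0}) :
    IPNearZero S ((fun a => s * a) '' A) ∧ IPNearZero S ((fun a => a * s) '' A) := by
  simp only [ipNearZero_iff_isIPNearZero] at hA ⊢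
  exact ip_near_zero_translates_general (Metric.ball_mem_nhds 0 one_pos)
    (fun a ha b hb ↦ (hSmul a ha b hb).1) hA ⟨hs.1.1, hs.1.2, hs.2⟩
end

section
/- Let S be a dense subsemigroup of (ℍ, +) such that S ∩ (B(1) \ {0}) is a subsemigroup of (B(1) \ {0}, ·), where B(1) is the open unit ball around 0. If A ⊆ S is an IP* set near 0 in (S, +), then for every s ∈ S ∩ B(1) \ {0}, both s⁻¹A = {t ∈ S : s·t ∈ A} and As⁻¹ = {t ∈ S : t·s ∈ A} are IP* sets near 0. -/
open Filter Topology

/-- `D` is an IP* set near 0 in `S`: it meets every IP set near 0 in an IP set near 0. -/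
def IPStarNearZero (S D : Set (Quaternion ℝ)) : Prop :=
  ∀ C ⊆ S, IPNearZero S C → IPNearZero S (C ∩ D)

/-!
Each of the maps `t ↦ s * t` and `t ↦ t * s` is a homeomorphic automorphism `f` of the additive
group which maps a relative neighbourhood of `0` in `S` into `S`. A convergent series has terms
tending to `0`, so a tail of any sequence witnessing that `C` is an IP set near `0` lies in this
neighbourhood; its image under `f` witnesses an IP set near `0`, which `A` meets in an IP set near
`0`. Pulling the latter back along `f⁻¹` gives an IP set near `0` inside `C ∩ f⁻¹(A)`.
-/

section FiniteSums

variable {M N : Type*} [AddCommMonoid M] [AddCommMonoid N]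

/-- The set `FS(⟨xₙ⟩)` of sums over nonempty finite index sets, for a sequence in an arbitrary
commutative monoid. Unlike `Hindman.FS`, it is indexed by finsets. -/
def finiteSums (x : ℕ → M) : Set M :=
  {a | ∃ H : Finset ℕ, H.Nonempty ∧ a = ∑ t ∈ H, x t}

theorem apply_mem_finiteSums (x : ℕ → M) (n : ℕ) : x n ∈ finiteSums x :=
  ⟨{n}, Finset.singleton_nonempty n, (Finset.sum_singleton x n).symm⟩

theorem finiteSums_subset_of_forall_mem (S : AddSubsemigroup M) {x : ℕ → M} (hx : ∀ n, x n ∈ S) :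
    finiteSums x ⊆ S := by
  rintro _ ⟨H, hH, rfl⟩
  exact Finset.sum_induction_nonempty x (· ∈ S) (fun _ _ => S.add_mem) hH fun t _ => hx t

theorem finiteSums_nat_add_subset (x : ℕ → M) (k : ℕ) :
    finiteSums (fun n => x (n + k)) ⊆ finiteSums x := by
  rintro _ ⟨H, hH, rfl⟩
  exact ⟨H.map (addRightEmbedding k), hH.map, by simp⟩

theorem finiteSums_map_subset (f : M →+ N) (x : ℕ → M) :
    finiteSums (fun n => f (x n)) ⊆ f '' finiteSums x := by
  rintro _ ⟨H, hH, rfl⟩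
  exact ⟨∑ t ∈ H, x t, ⟨H, hH, rfl⟩, map_sum f x H⟩

end FiniteSums

/-- Conditional convergence of the series `∑ₙ xₙ`: its sequence of partial sums has a limit. -/
def ConvergentSeries {M : Type*} [AddCommMonoid M] [TopologicalSpace M] (x : ℕ → M) : Prop :=
  ∃ L : M, Tendsto (fun N => ∑ n ∈ Finset.range N, x n) atTop (𝓝 L)

namespace ConvergentSeries

theorem map {M N : Type*} [AddCommMonoid M] [TopologicalSpace M] [AddCommMonoid N]
    [TopologicalSpace N] {x : ℕ → M} (hx : ConvergentSeries x) (f : M →+ N) (hf : Continuous f) :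
    ConvergentSeries fun n => f (x n) := by
  obtain ⟨L, hL⟩ := hx
  exact ⟨f L, by simpa only [Function.comp_def, map_sum] using (hf.tendsto L).comp hL⟩

variable {M : Type*} [AddCommGroup M] [TopologicalSpace M] [IsTopologicalAddGroup M] {x : ℕ → M}

theorem tendsto_zero (hx : ConvergentSeries x) : Tendsto x atTop (𝓝 0) := by
  obtain ⟨L, hL⟩ := hx
  simpa only [Function.comp_def, Finset.sum_range_succ_sub_sum, sub_self] using
    (hL.comp (tendsto_add_atTop_nat 1)).sub hL

theorem comp_nat_add (hx : ConvergentSeries x) (k : ℕ) :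
    ConvergentSeries fun n => x (n + k) := by
  obtain ⟨L, hL⟩ := hx
  refine ⟨L - ∑ n ∈ Finset.range k, x n, ?_⟩
  have hsub := (hL.comp (tendsto_add_atTop_nat k)).sub_const (∑ n ∈ Finset.range k, x n)
  simpa only [Function.comp_def, add_comm _ k, Finset.sum_range_add_sub_sum_range] using hsub

end ConvergentSeries

/-- `A` is an IP set near `0` in `S`, for subsets of an arbitrary topological commutative monoid:
`A` contains all finite sums of a convergent series with terms in `S`. -/
def IsIPSetNearZero {M : Type*} [AddCommMonoid M] [TopologicalSpace M] (S A : Set M) : Prop :=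
  ∃ x : ℕ → M, (∀ n, x n ∈ S) ∧ ConvergentSeries x ∧ finiteSums x ⊆ A

/-- `D` is an IP* set near `0` in `S`, for subsets of an arbitrary topological commutative monoid:
`D` meets every IP set near `0` in an IP set near `0`. Over the quaternions it is definitionally
`IPStarNearZero`. -/
def IsIPStarSetNearZero {M : Type*} [AddCommMonoid M] [TopologicalSpace M] (S D : Set M) : Prop :=
  ∀ C ⊆ S, IsIPSetNearZero S C → IsIPSetNearZero S (C ∩ D)

namespace IsIPSetNearZero

section AddCommMonoid

variable {M N : Type*} [AddCommMonoid M] [TopologicalSpace M] [AddCommMonoid N]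
  [TopologicalSpace N] {S T A B : Set M}

theorem mono (hA : IsIPSetNearZero S A) (hAB : A ⊆ B) (hBT : B ⊆ T) : IsIPSetNearZero T B := by
  obtain ⟨x, -, hx, hxA⟩ := hA
  exact ⟨x, fun n => hBT (hAB (hxA (apply_mem_finiteSums x n))), hx, hxA.trans hAB⟩

theorem image (hA : IsIPSetNearZero S A) (f : M →+ N) (hf : Continuous f) :
    IsIPSetNearZero (f '' S) (f '' A) := by
  obtain ⟨x, hxS, hx, hxA⟩ := hA
  exact ⟨fun n => f (x n), fun n => Set.mem_image_of_mem f (hxS n), hx.map f hf,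
    (finiteSums_map_subset f x).trans (Set.image_mono hxA)⟩

theorem inter_addSubsemigroup (hA : IsIPSetNearZero S A) (P : AddSubsemigroup M) (hSP : S ⊆ P) :
    IsIPSetNearZero (P : Set M) (A ∩ P) := by
  obtain ⟨x, hxS, hx, hxA⟩ := hA
  have hxP : ∀ n, x n ∈ P := fun n => hSP (hxS n)
  exact ⟨x, hxP, hx, Set.subset_inter hxA (finiteSums_subset_of_forall_mem P hxP)⟩

end AddCommMonoid

theorem of_mem_nhdsWithin {M : Type*} [AddCommGroup M] [TopologicalSpace M]
    [IsTopologicalAddGroup M] {S V A : Set M} (hA : IsIPSetNearZero S A) (hV : V ∈ 𝓝[S] 0) :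
    IsIPSetNearZero V A := by
  obtain ⟨x, hxS, hx, hxA⟩ := hA
  have hxV : ∀ᶠ n in atTop, x n ∈ V :=
    tendsto_nhdsWithin_iff.2 ⟨hx.tendsto_zero, .of_forall hxS⟩ hV
  obtain ⟨k, hk⟩ := eventually_atTop.1 hxV
  exact ⟨fun n => x (n + k), fun n => hk _ (Nat.le_add_left k n), hx.comp_nat_add k,
    (finiteSums_nat_add_subset x k).trans hxA⟩

end IsIPSetNearZero

theorem IsIPStarSetNearZero.preimage {M N : Type*} [AddCommGroup M] [TopologicalSpace M]
    [IsTopologicalAddGroup M] [AddCommMonoid N] [TopologicalSpace N] {S : Set M}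
    {T : AddSubsemigroup N} {A : Set N} (hA : IsIPStarSetNearZero (T : Set N) A) (f : M ≃ₜ+ N)
    (hf : ∀ᶠ t in 𝓝[S] 0, f t ∈ T) : IsIPStarSetNearZero S {t | t ∈ S ∧ f t ∈ A} := by
  intro C hCS hC
  have himage : IsIPSetNearZero (T : Set N) (f '' C ∩ T) :=
    ((hC.of_mem_nhdsWithin hf).image (f : M →+ N) f.continuous).inter_addSubsemigroup T
      (Set.image_subset_iff.2 subset_rfl)
  have hpullback := (hA _ Set.inter_subset_right himage).image (f.symm : N →+ M) f.symm.continuous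
  refine hpullback.mono ?_ (Set.inter_subset_left.trans hCS)
  rintro _ ⟨_, ⟨⟨⟨c, hcC, rfl⟩, -⟩, hcA⟩, rfl⟩
  simpa using And.intro hcC ⟨hCS hcC, hcA⟩

theorem eventually_map_mem_of_mapsTo_diff_zero {M F : Type*} [Zero M] [TopologicalSpace M]
    [FunLike F M M] [ZeroHomClass F M M] {S U : Set M} (hU : U ∈ 𝓝 0) (f : F)
    (hf : Set.MapsTo f (S ∩ (U \ {0})) S) : ∀ᶠ t in 𝓝[S] 0, f t ∈ S := by
  filter_upwards [inter_mem_nhdsWithin S hU] with t ⟨htS, htU⟩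
  obtain rfl | ht := eq_or_ne t 0
  · rwa [map_zero]
  · exact hf ⟨htS, htU, ht⟩

theorem ipstar_near_zero_quotients_general {R : Type*} [Ring R] [TopologicalSpace R]
    [IsTopologicalRing R] {S : AddSubsemigroup R} {A U : Set R} (hU : U ∈ 𝓝 0) (s : Rˣ)
    (hleft : ∀ t ∈ (S : Set R) ∩ (U \ {0}), s * t ∈ S)
    (hright : ∀ t ∈ (S : Set R) ∩ (U \ {0}), t * s ∈ S) (hA : IsIPStarSetNearZero (S : Set R) A) :
    IsIPStarSetNearZero (S : Set R) {t | t ∈ S ∧ s * t ∈ A} ∧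
    IsIPStarSetNearZero (S : Set R) {t | t ∈ S ∧ t * s ∈ A} :=
  ⟨hA.preimage (ContinuousAddEquiv.mulLeft s)
      (eventually_map_mem_of_mapsTo_diff_zero hU (ContinuousAddEquiv.mulLeft s) hleft),
    hA.preimage (ContinuousAddEquiv.mulRight s)
      (eventually_map_mem_of_mapsTo_diff_zero hU (ContinuousAddEquiv.mulRight s) hright)⟩

/-- Let `S` be a dense subsemigroup of `(ℍ, +)` such that
`S ∩ (B(1) \ {0})` is a subsemigroup of `(B(1) \ {0}, ·)`.  If `A ⊆ S` is an IP* set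
near 0 in `(S, +)`, then for every `s ∈ S ∩ B(1) \ {0}`, both
`s⁻¹A = {t ∈ S : s·t ∈ A}` and `As⁻¹ = {t ∈ S : t·s ∈ A}` are IP* sets near 0. -/
theorem ipstar_near_zero_quotients (S : Set (Quaternion ℝ))
    (hSdense : Dense S)
    (hSadd : ∀ a ∈ S, ∀ b ∈ S, a + b ∈ S)
    (hSmul : ∀ a ∈ S ∩ (Metric.ball 0 1 \ {0}), ∀ b ∈ S ∩ (Metric.ball 0 1 \ {0}),
      a * b ∈ S ∩ (Metric.ball 0 1 \ {0}))
    (A : Set (Quaternion ℝ)) (hAS : A ⊆ S) (hA : IPStarNearZero S A)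
    (s : Quaternion ℝ) (hs : s ∈ (S ∩ Metric.ball 0 1) \ {0}) :
    IPStarNearZero S {t | t ∈ S ∧ s * t ∈ A} ∧
    IPStarNearZero S {t | t ∈ S ∧ t * s ∈ A} :=
  ipstar_near_zero_quotients_general (S := ⟨S, @fun a b ha hb => hSadd a ha b hb⟩)
    (Metric.ball_mem_nhds 0 one_pos) (Units.mk0 s hs.2)
    (fun t ht => (hSmul s ⟨hs.1.1, hs.1.2, hs.2⟩ t ht).1)
    (fun t ht => (hSmul t ht s ⟨hs.1.1, hs.1.2, hs.2⟩).1) hA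
end

section
/- Let S be a dense subsemigroup of (ℍ, +). A subset A of S is an IP set near 0 (i.e., there is a sequence ⟨xₙ⟩ in S with ∑ₙ₌₁^∞ xₙ convergent and FS(⟨xₙ⟩ₙ₌₁^∞) ⊆ A) if and only if there exists an idempotent ultrafilter p ∈ 0⁺(S) with A ∈ p. -/
open Filter Topology

/-- The semigroup operation `+` on the ultrafilters `βS_d` on `S`:
`A ∈ p + q` iff `{x ∈ S : {y ∈ S : x + y ∈ A} ∈ q} ∈ p`. -/
noncomputable def uaddS (S : Set (Quaternion ℝ)) (hS : ∀ a ∈ S, ∀ b ∈ S, a + b ∈ S)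
    (p q : Ultrafilter S) : Ultrafilter S :=
  p.bind fun x => q.map fun y => (⟨x.1 + y.1, hS x.1 x.2 y.1 y.2⟩ : S)

/-- `0⁺(S)`: the ultrafilters on `S` every member of which meets every
ball `B(r)` around `0`; i.e. `{s ∈ S : ‖s‖ < r} ∈ p` for every `r > 0`. -/
def zeroPlus (S : Set (Quaternion ℝ)) : Set (Ultrafilter S) :=
  {p | ∀ r : ℝ, 0 < r → {s : S | ‖(s : Quaternion ℝ)‖ < r} ∈ p}

/-!
Given sets `B 0, B 1, …` in a semigroup, some idempotent ultrafilter contains every `B n` if and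
only if some sequence has, for every `n`, all finite sums of its terms from the `n`-th on in `B n`:
this is the Galvin–Glazer argument. Apply it to `B n = A ∩ u n`, where `u` is a basis of
neighbourhoods of `0` with `u (n + 1) + u (n + 1) ⊆ u n`. The terms of a convergent series tend to
`0`, and if `x n ∈ u (n + 1)` for all `n`, then the finite sums of the terms from the `n`-th on lie
in `u n`; so a sparse enough subsequence has the required finite sums. Conversely, for these sets
the condition on finite sums contains Cauchy's criterion for summability.
-/

attribute [local instance] Ultrafilter.add Ultrafilter.addSemigroup

section AddSemigroup

variable {M N : Type*} [AddSemigroup M] [AddSemigroup N]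

theorem hindmanFS_drop_subset_of_add_mem {a : Stream' M} {C : ℕ → Set M} (anti : Antitone C)
    (get_mem : ∀ n, a.get n ∈ C n) (add_mem : ∀ n, ∀ m ∈ C (n + 1), a.get n + m ∈ C n) (n : ℕ) :
    Hindman.FS (a.drop n) ⊆ C n := by
  intro m hm
  generalize hb : a.drop n = b at hm
  induction hm generalizing n with
  | head' => subst hb; simpa using get_mem n
  | tail' b m _ ih => exact anti n.le_succ (ih (n + 1) (by rw [← hb, Stream'.tail_drop']))
  | cons' b m _ ih =>
    subst hb
    simpa using add_mem n m (ih (n + 1) (by rw [Stream'.tail_drop']))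

theorem antitone_hindmanFS_drop (a : Stream' M) : Antitone fun n => Hindman.FS (a.drop n) := by
  intro i j hij
  obtain ⟨d, rfl⟩ := Nat.exists_eq_add_of_le hij
  simpa only [Stream'.drop_drop] using Hindman.FS_iter_tail_sub_FS (a.drop i) d

theorem get_mem_hindmanFS_drop (a : Stream' M) (n : ℕ) : a.get n ∈ Hindman.FS (a.drop n) := by
  simpa only [Stream'.head_drop] using Hindman.FS.head (a.drop n)

theorem get_add_mem_hindmanFS_drop (a : Stream' M) {n : ℕ} {m : M}
    (hm : m ∈ Hindman.FS (a.drop (n + 1))) : a.get n + m ∈ Hindman.FS (a.drop n) := by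
  rw [← Stream'.head_drop]
  exact Hindman.FS.cons _ m (by rwa [Stream'.tail_drop'])

theorem hindmanFS_subsequence_subset (a : Stream' M) {φ : ℕ → ℕ} (hφ : StrictMono φ) :
    Hindman.FS (fun n => a.get (φ n) : Stream' M) ⊆ Hindman.FS a := by
  have anti := antitone_hindmanFS_drop a
  refine (hindmanFS_drop_subset_of_add_mem (a := fun n => a.get (φ n))
    (C := fun n => Hindman.FS (a.drop (φ n)))
    (anti.comp_monotone hφ.monotone) (fun n => get_mem_hindmanFS_drop a (φ n))
    (fun n m hm => ?_) 0).trans (Hindman.FS_iter_tail_sub_FS a (φ 0))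
  exact get_add_mem_hindmanFS_drop a (anti (hφ n.lt_succ_self) hm)

theorem hindmanFS_map (f : M →ₙ+ N) (a : Stream' M) :
    Hindman.FS (a.map f) = f '' Hindman.FS a := by
  refine Set.Subset.antisymm (fun m hm => ?_) (Set.image_subset_iff.2 fun m hm => ?_)
  · refine hindmanFS_drop_subset_of_add_mem (a := a.map f)
      (C := fun n => f '' Hindman.FS (a.drop n))
      (fun i j hij => Set.image_mono (antitone_hindmanFS_drop a hij))
      (fun n => ⟨_, get_mem_hindmanFS_drop a n, Stream'.get_map ..⟩) ?_ 0 hm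
    rintro n _ ⟨m, hm, rfl⟩
    exact ⟨_, get_add_mem_hindmanFS_drop a hm, by simp⟩
  · refine hindmanFS_drop_subset_of_add_mem (a := a)
      (C := fun n => f ⁻¹' Hindman.FS ((a.map f).drop n))
      (fun i j hij => Set.preimage_mono (antitone_hindmanFS_drop _ hij))
      (fun n => get_mem_hindmanFS_drop (a.map f) n) (fun n m hm => ?_) 0 hm
    simpa using get_add_mem_hindmanFS_drop (a.map f) hm

theorem exists_stream_mem_addSubsemigroup_iff (S : AddSubsemigroup M) (B : ℕ → Set M) :
    (∃ x : Stream' M, (∀ n, x.get n ∈ S) ∧ ∀ n, Hindman.FS (x.drop n) ⊆ B n) ↔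
      ∃ a : Stream' S, ∀ n, Hindman.FS (a.drop n) ⊆ (↑) ⁻¹' B n := by
  have hindmanFS_map_drop (a : Stream' S) (n : ℕ) : Hindman.FS ((a.map (↑)).drop n) ⊆ B n ↔
      Hindman.FS (a.drop n) ⊆ (↑) ⁻¹' B n := by
    have hindmanFS_map_coe := hindmanFS_map (AddMemClass.subtype S) (a.drop n)
    rw [AddMemClass.coe_subtype] at hindmanFS_map_coe
    rw [Stream'.drop_map, hindmanFS_map_coe, Set.image_subset_iff]
  constructor
  · rintro ⟨x, hxS, hx⟩
    exact ⟨fun n => ⟨x.get n, hxS n⟩, fun n => (hindmanFS_map_drop _ n).1 (hx n)⟩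
  · rintro ⟨a, ha⟩
    exact ⟨a.map ((↑) : S → M), fun n => (a.get n).2, fun n => (hindmanFS_map_drop a n).2 (ha n)⟩

theorem exists_idempotent_ultrafilter_le {F : Filter M} [F.NeBot]
    (hF : ∀ s ∈ F, ∀ᶠ x in F, ∀ᶠ y in F, x + y ∈ s) :
    ∃ p : Ultrafilter M, ↑p ≤ F ∧ p + p = p := by
  have isClosed_le : IsClosed {p : Ultrafilter M | ↑p ≤ F} := by
    simp only [Filter.le_def, Set.ofPred_forall]
    exact isClosed_biInter fun s _ => ultrafilter_isClosed_basic s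
  refine exists_idempotent_in_compact_add_subsemigroup Ultrafilter.continuous_add_left _
    (Ultrafilter.exists_le F) isClosed_le.isCompact fun p hp q hq s hs => ?_
  exact hp ((hF s hs).mono fun x hx => hq hx)

theorem exists_idempotent_ultrafilter_forall_hindmanFS_drop_mem (a : Stream' M) :
    ∃ p : Ultrafilter M, p + p = p ∧ ∀ n, Hindman.FS (a.drop n) ∈ p := by
  have basis : (⨅ n, 𝓟 (Hindman.FS (a.drop n))).HasAntitoneBasis
      fun n => Hindman.FS (a.drop n) := .iInf_principal (antitone_hindmanFS_drop a)
  have : (⨅ n, 𝓟 (Hindman.FS (a.drop n))).NeBot :=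
    basis.1.neBot_iff.2 fun {n} _ => ⟨_, get_mem_hindmanFS_drop a n⟩
  obtain ⟨p, hp, hpp⟩ := exists_idempotent_ultrafilter_le
    (F := ⨅ n, 𝓟 (Hindman.FS (a.drop n))) fun s hs => by
      obtain ⟨n, hn⟩ := basis.mem_iff.1 hs
      filter_upwards [basis.mem n] with x hx
      obtain ⟨k, hk⟩ := Hindman.FS.add hx
      filter_upwards [basis.mem (n + k)] with y hy
      exact hn (hk y (by rwa [Stream'.drop_drop]))
  exact ⟨p, hpp, fun n => hp (basis.mem n)⟩

theorem exists_mem_eventually_add_mem {p : Ultrafilter M} (hp : p + p = p) {s : Set M}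
    (hs : s ∈ p) : ∃ x ∈ s, ∀ᶠ y in p, x + y ∈ s := by
  have hs' : ∀ᶠ x in p, ∀ᶠ y in p, x + y ∈ s := by
    rwa [← Ultrafilter.eventually_add, hp]
  exact ((show ∀ᶠ x in p, x ∈ s from hs).and hs').exists

theorem exists_stream_hindmanFS_drop_subset_of_mem {p : Ultrafilter M} (hp : p + p = p)
    {B : ℕ → Set M} (hB : ∀ n, B n ∈ p) :
    ∃ a : Stream' M, ∀ n, Hindman.FS (a.drop n) ⊆ B n := by
  choose elem elem_mem elem_add using
    fun s : {s : Set M // s ∈ p} => exists_mem_eventually_add_mem hp s.2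
  let C : ℕ → {s : Set M // s ∈ p} := Nat.rec ⟨B 0, hB 0⟩ fun n s =>
    ⟨(s.1 ∩ {y | elem s + y ∈ s.1}) ∩ B (n + 1),
      inter_mem (inter_mem s.2 (elem_add s)) (hB (n + 1))⟩
  have C_subset : ∀ n, (C n).1 ⊆ B n
    | 0 => subset_rfl
    | _ + 1 => Set.inter_subset_right
  exact ⟨fun n => elem (C n), fun n => (hindmanFS_drop_subset_of_add_mem (C := fun n => (C n).1)
    (antitone_nat_of_succ_le fun n y hy => hy.1.1) (fun n => elem_mem (C n))
    (fun n y hy => hy.1.2) n).trans (C_subset n)⟩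

theorem exists_idempotent_ultrafilter_forall_mem_iff {B : ℕ → Set M} :
    (∃ p : Ultrafilter M, p + p = p ∧ ∀ n, B n ∈ p) ↔
      ∃ a : Stream' M, ∀ n, Hindman.FS (a.drop n) ⊆ B n := by
  constructor
  · rintro ⟨p, hp, hB⟩
    exact exists_stream_hindmanFS_drop_subset_of_mem hp hB
  · rintro ⟨a, ha⟩
    obtain ⟨p, hp, hmem⟩ := exists_idempotent_ultrafilter_forall_hindmanFS_drop_mem a
    exact ⟨p, hp, fun n => mem_of_superset (hmem n) (ha n)⟩

end AddSemigroup

theorem mem_hindmanFS_drop_iff {M : Type*} [AddCommMonoid M] {x : Stream' M} {n : ℕ} {m : M} :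
    m ∈ Hindman.FS (x.drop n) ↔
      ∃ H : Finset ℕ, H.Nonempty ∧ (∀ t ∈ H, n ≤ t) ∧ m = ∑ t ∈ H, x.get t := by
  constructor
  · refine fun hm => hindmanFS_drop_subset_of_add_mem
      (C := fun n => {m | ∃ H : Finset ℕ, H.Nonempty ∧ (∀ t ∈ H, n ≤ t) ∧ m = ∑ t ∈ H, x.get t})
      ?_ (fun n => ⟨{n}, by simp⟩) ?_ n hm
    · rintro i j hij _ ⟨H, hH, hj, rfl⟩
      exact ⟨H, hH, fun t ht => hij.trans (hj t ht), rfl⟩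
    · rintro n _ ⟨H, -, hn, rfl⟩
      have n_notMem : n ∉ H := fun h => (hn n h).not_gt n.lt_succ_self
      refine ⟨insert n H, H.insert_nonempty n, ?_, (Finset.sum_insert n_notMem).symm⟩
      exact Finset.forall_mem_insert .. |>.2 ⟨le_rfl, fun t ht => n.le_succ.trans (hn t ht)⟩
  · rintro ⟨H, hH, hn, rfl⟩
    have sub_injOn : Set.InjOn (· - n) (H : Set ℕ) := fun i hi j hj hij =>
      (tsub_left_inj (hn i hi) (hn j hj)).1 hij
    have hsum := Hindman.FS.finsetSum (x.drop n) (H.image (· - n)) (hH.image _)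
    rw [Finset.sum_image sub_injOn] at hsum
    convert hsum using 2 with t ht
    rw [Stream'.get_drop, Nat.add_sub_cancel' (hn t ht)]

theorem exists_strictMono_hindmanFS_drop_subset {M : Type*} [AddMonoid M] [TopologicalSpace M]
    {x : ℕ → M} (hx : Tendsto x atTop (𝓝 0)) {u : ℕ → Set M} (u_anti : Antitone u)
    (u_mem : ∀ n, u n ∈ 𝓝 0) (u_add : ∀ n, ∀ a ∈ u (n + 1), ∀ b ∈ u (n + 1), a + b ∈ u n) :
    ∃ φ : ℕ → ℕ, StrictMono φ ∧
      ∀ n, Hindman.FS (Stream'.drop n fun k => x (φ k)) ⊆ u n := by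
  obtain ⟨φ, hφ, hφu⟩ :=
    extraction_forall_of_eventually fun n => hx.eventually_mem (u_mem (n + 1))
  exact ⟨φ, hφ, hindmanFS_drop_subset_of_add_mem u_anti (fun n => u_anti n.le_succ (hφu n))
    fun n m hm => u_add n _ (hφu n) m hm⟩

theorem tendsto_zero_of_tendsto_sum_range {G : Type*} [AddCommGroup G] [TopologicalSpace G]
    [ContinuousSub G] {x : ℕ → G} {L : G}
    (h : Tendsto (fun N => ∑ n ∈ Finset.range N, x n) atTop (𝓝 L)) :
    Tendsto x atTop (𝓝 0) := by
  simpa [Finset.sum_range_succ] using ((tendsto_add_atTop_iff_nat 1).2 h).sub h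

section UniformAddGroup

variable {E : Type*} [AddCommGroup E] [UniformSpace E] [IsUniformAddGroup E] [CompleteSpace E]

theorem summable_of_hindmanFS_drop_subset {x : Stream' E}
    (hx : ∀ e ∈ 𝓝 (0 : E), ∃ n, Hindman.FS (x.drop n) ⊆ e) : Summable x.get := by
  refine summable_iff_vanishing.2 fun e he => ?_
  obtain ⟨n, hn⟩ := hx e he
  refine ⟨Finset.range n, fun H hdisj => ?_⟩
  obtain rfl | hH := H.eq_empty_or_nonempty
  · simpa using mem_of_mem_nhds he
  · refine hn (mem_hindmanFS_drop_iff.2 ⟨H, hH, fun t ht => ?_, rfl⟩)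
    simpa using Finset.disjoint_left.1 hdisj ht

theorem exists_tendsto_sum_range_hindmanFS_subset_iff {u : ℕ → Set E}
    (hu : (𝓝 0).HasAntitoneBasis u)
    (u_add : ∀ n, ∀ a ∈ u (n + 1), ∀ b ∈ u (n + 1), a + b ∈ u n) (S A : Set E) :
    (∃ x : Stream' E, (∀ n, x.get n ∈ S) ∧
        (∃ L, Tendsto (fun N => ∑ n ∈ Finset.range N, x.get n) atTop (𝓝 L)) ∧
        Hindman.FS x ⊆ A) ↔
      ∃ x : Stream' E, (∀ n, x.get n ∈ S) ∧ ∀ n, Hindman.FS (x.drop n) ⊆ A ∩ u n := by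
  constructor
  · rintro ⟨x, hxS, ⟨L, hL⟩, hxA⟩
    obtain ⟨φ, hφ, hφu⟩ := exists_strictMono_hindmanFS_drop_subset
      (tendsto_zero_of_tendsto_sum_range hL) hu.antitone hu.mem u_add
    refine ⟨fun n => x.get (φ n), fun n => hxS (φ n), fun n => Set.subset_inter ?_ (hφu n)⟩
    exact (Hindman.FS_iter_tail_sub_FS _ n).trans ((hindmanFS_subsequence_subset x hφ).trans hxA)
  · rintro ⟨x, hxS, hx⟩
    have summable_x : Summable x.get := summable_of_hindmanFS_drop_subset fun e he =>
      let ⟨n, hn⟩ := hu.mem_iff.1 he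
      ⟨n, (hx n).trans (Set.inter_subset_right.trans hn)⟩
    exact ⟨x, hxS, ⟨_, summable_x.hasSum.tendsto_sum_nat⟩,
      (hx 0).trans Set.inter_subset_left⟩

theorem ip_near_zero_iff_idempotent_general [FirstCountableTopology E] (S : AddSubsemigroup E)
    (A : Set E) :
    (∃ x : Stream' E, (∀ n, x.get n ∈ S) ∧
        (∃ L, Tendsto (fun N => ∑ n ∈ Finset.range N, x.get n) atTop (𝓝 L)) ∧
        Hindman.FS x ⊆ A) ↔
      ∃ p : Ultrafilter S, Tendsto ((↑) : S → E) p (𝓝 0) ∧ p + p = p ∧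
        {s : S | (s : E) ∈ A} ∈ p := by
  obtain ⟨u, hu, u_add⟩ := IsTopologicalAddGroup.exists_antitone_basis_nhds_zero E
  have mem_iff_tendsto (p : Ultrafilter S) : (∀ n, (↑) ⁻¹' (A ∩ u n) ∈ p) ↔
      Tendsto ((↑) : S → E) p (𝓝 0) ∧ {s : S | (s : E) ∈ A} ∈ p := by
    rw [hu.tendsto_right_iff]
    exact ⟨fun h => ⟨fun n _ => mem_of_superset (h n) Set.inter_subset_right,
      mem_of_superset (h 0) Set.inter_subset_left⟩, fun h n => inter_mem h.2 (h.1 n trivial)⟩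
  have series_iff := exists_tendsto_sum_range_hindmanFS_subset_iff hu
    (fun n a ha b hb => u_add n (Set.add_mem_add ha hb)) S A
  refine series_iff.trans ((exists_stream_mem_addSubsemigroup_iff S _).trans ?_)
  rw [← exists_idempotent_ultrafilter_forall_mem_iff]
  exact exists_congr fun p => by rw [mem_iff_tendsto, and_left_comm]

end UniformAddGroup

theorem mem_zeroPlus_iff_tendsto {S : Set (Quaternion ℝ)} {p : Ultrafilter S} :
    p ∈ zeroPlus S ↔ Tendsto ((↑) : S → Quaternion ℝ) p (𝓝 0) := by
  simp [Metric.nhds_basis_ball.tendsto_right_iff, zeroPlus, Filter.Eventually]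

theorem FS_eq_hindmanFS (x : Stream' (Quaternion ℝ)) : FS x = Hindman.FS x := by
  ext a
  simpa [FS, Stream'.get] using (mem_hindmanFS_drop_iff (x := x) (n := 0) (m := a)).symm

theorem ipNearZero_iff {S A : Set (Quaternion ℝ)} :
    IPNearZero S A ↔ ∃ x : Stream' (Quaternion ℝ), (∀ n, x.get n ∈ S) ∧
      (∃ L, Tendsto (fun N => ∑ n ∈ Finset.range N, x.get n) atTop (𝓝 L)) ∧
      Hindman.FS x ⊆ A := by
  simp only [← FS_eq_hindmanFS]
  rfl

/-- For a dense subsemigroup `S` of `(ℍ, +)`, a subset `A` of `S` is an IP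
set near 0 if and only if `A` belongs to some idempotent ultrafilter `p ∈ 0⁺(S)`. -/
theorem ip_near_zero_iff_idempotent (S : Set (Quaternion ℝ))
    (hSdense : Dense S)
    (hSadd : ∀ a ∈ S, ∀ b ∈ S, a + b ∈ S)
    (A : Set (Quaternion ℝ)) (hAS : A ⊆ S) :
    IPNearZero S A ↔
      ∃ p : Ultrafilter S, p ∈ zeroPlus S ∧ uaddS S hSadd p p = p ∧
        {x : S | (x : Quaternion ℝ) ∈ A} ∈ p := by
  simp only [ipNearZero_iff, mem_zeroPlus_iff_tendsto]
  -- `uaddS S hSadd` unfolds to the sum of ultrafilters on the subsemigroup with carrier `S`.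
  exact ip_near_zero_iff_idempotent_general ⟨S, fun {a b} ha hb => hSadd a ha b hb⟩ A
end
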